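/- For every positive integer n, the number of quadruples (x₁, x₂, x₃, x₄) ∈ ℤ⁴ with x₁² + x₂² + x₃² + x₄² = n, x₁ ≡ x₂ ≡ x₃ ≡ 1 (mod 3), and x₄ ≡ 0 (mod 3) equals σ(n/3) − σ(n/9) − 4σ(n/12) + 4σ(n/36). -/

import Mathlib

open Finset

/-- `sigmaDiv n k = σ(n/k) = ∑_{d ∣ n/k} d`, interpreted as `0` when `k` does not divide `n`. -/
def sigmaDiv (n k : ℕ) : ℤ := if k ∣ n then ∑ d ∈ (n / k).divisors, (d : ℤ) else 0

/-!
A sum of four squares is congruent modulo `3` to the number of its terms prime to `3`. If `3 ∣ n`,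
the entries of a representation of `n` are therefore all divisible by `3`, or exactly three of them
are not. Permuting coordinates and changing signs makes the number of the latter `4 * 8` times the
required one, and scaling the former by `3` identifies them with the representations of `n / 9`, so
Jacobi's four-square theorem, applied to `n` and to `n / 9`, gives the result.

Jacobi's theorem is reduced by parity to the representations of `k ≡ 4 [ZMOD 8]` by four odd
squares. For `N ≡ 5 [ZMOD 8]` their number `r k` satisfies
`∑ i odd, (N - 5 * i ^ 2) * r (N - i ^ 2) = 0`, because the coordinates of a representation of `N`
by five odd squares play symmetric roles. Involutions on the windmills `i ^ 2 + 4 * d * e = N` show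
that `k ↦ σ (k / 4)` satisfies the same recursion, and a solution that vanishes at negative `k` is
determined by its value at `4`.
-/

lemma mem_Icc_neg_self_of_sq_le {a k : ℤ} (h : a ^ 2 ≤ k) : a ∈ Icc (-k) k :=
  mem_Icc.2 (abs_le.1 (a.abs_eq_natAbs.trans_le (a.natAbs_le_self_sq.trans h)))

section SumSqReps

/-- The representations of `k` as a sum of squares of integers indexed by `ι`. The entries are
bounded by `|k|`, which makes the set a `Finset`. -/
noncomputable def sumSqReps (ι : Type*) [Fintype ι] [DecidableEq ι] (k : ℤ) : Finset (ι → ℤ) :=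
  {x ∈ Fintype.piFinset fun _ ↦ Icc (-k) k | ∑ i, x i ^ 2 = k}

variable {ι : Type*} [Fintype ι] [DecidableEq ι] {k : ℤ} {x : ι → ℤ}

@[simp]
lemma mem_sumSqReps : x ∈ sumSqReps ι k ↔ ∑ i, x i ^ 2 = k := by
  simp only [sumSqReps, mem_filter, Fintype.mem_piFinset, and_iff_right_iff_imp]
  rintro rfl i
  exact mem_Icc_neg_self_of_sq_le
    (single_le_sum (f := fun i ↦ x i ^ 2) (fun i _ ↦ sq_nonneg _) (mem_univ i))

lemma sumSqReps_of_neg (hk : k < 0) : sumSqReps ι k = ∅ := by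
  refine eq_empty_of_forall_notMem fun x hx ↦ hk.not_ge ?_
  rw [← mem_sumSqReps.1 hx]
  positivity

lemma card_filter_comp_perm_sumSqReps (σ : Equiv.Perm ι) (p : (ι → ℤ) → Prop) [DecidablePred p] :
    #{x ∈ sumSqReps ι k | p (x ∘ σ)} = #{x ∈ sumSqReps ι k | p x} := by
  refine card_equiv (σ.symm.arrowCongr (Equiv.refl ℤ)) fun x ↦ ?_
  have hx : ∑ i, x (σ i) ^ 2 = ∑ i, x i ^ 2 := Equiv.sum_comp σ fun i ↦ x i ^ 2
  simp [Equiv.arrowCongr, hx]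

lemma sum_card_mul_sq_sub_filter_sumSqReps (P : (ι → ℤ) → Prop) [DecidablePred P]
    (hP : ∀ (σ : Equiv.Perm ι) (x : ι → ℤ), P (x ∘ σ) ↔ P x) (i : ι) :
    ∑ x ∈ sumSqReps ι k with P x, (k - Fintype.card ι * x i ^ 2) = 0 := by
  have swap_coordinate (j : ι) :
      ∑ x ∈ sumSqReps ι k with P x, x j ^ 2 = ∑ x ∈ sumSqReps ι k with P x, x i ^ 2 := by
    refine sum_equiv ((Equiv.swap i j).arrowCongr (Equiv.refl ℤ)) (fun x ↦ ?_) fun x _ ↦ ?_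
    · have := hP (Equiv.swap i j) x
      have hsum := Equiv.sum_comp (Equiv.swap i j) fun l ↦ x l ^ 2
      simp_all [Equiv.arrowCongr]
    · simp [Equiv.arrowCongr]
  have sum_const : ∑ x ∈ sumSqReps ι k with P x, k =
      ∑ x ∈ sumSqReps ι k with P x, ∑ j, x j ^ 2 :=
    sum_congr rfl fun x hx ↦ (mem_sumSqReps.1 (mem_filter.1 hx).1).symm
  rw [sum_sub_distrib, ← mul_sum, sum_const, sum_comm, sum_congr rfl fun j _ ↦ swap_coordinate j]
  simp

lemma card_filter_sumSqReps_apply_zero (n : ℕ) (N a : ℤ) (p : ℤ → Prop) [DecidablePred p]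
    (ha : p a) :
    #{x ∈ sumSqReps (Fin (n + 1)) N | (∀ i, p (x i)) ∧ x 0 = a} =
      #{y ∈ sumSqReps (Fin n) (N - a ^ 2) | ∀ i, p (y i)} := by
  refine card_nbij' Fin.tail (Fin.cons (α := fun _ ↦ ℤ) a) ?_ ?_ ?_ ?_
  · intro x
    simp only [coe_filter, Set.mem_ofPred_eq, mem_sumSqReps, Fin.forall_fin_succ, Fin.sum_univ_succ]
    rintro ⟨h, ⟨-, hp⟩, rfl⟩
    exact ⟨by simp [Fin.tail, ← h], hp⟩
  · intro y
    simp +contextual [Fin.forall_fin_succ, Fin.sum_univ_succ, ha]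
  · intro x
    simp only [coe_filter, Set.mem_ofPred_eq]
    rintro ⟨-, -, rfl⟩
    exact Fin.cons_self_tail x
  · exact fun y _ ↦ Fin.tail_cons (α := fun _ ↦ ℤ) a y

/-- The sum of `N - (n + 1) * x₀ ^ 2` over all representations `x` of `N` by `n + 1` squares
vanishes by symmetry in the coordinates; here it is grouped by the value `a` of `x₀`. -/
lemma sum_mul_card_filter_sumSqReps (n : ℕ) (N : ℤ) (p : ℤ → Prop) [DecidablePred p] :
    ∑ a ∈ Icc (-N) N with p a, (N - (n + 1) * a ^ 2) *
      (#{y ∈ sumSqReps (Fin n) (N - a ^ 2) | ∀ i, p (y i)} : ℤ) = 0 := by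
  have maps : ∀ x ∈ ({x ∈ sumSqReps (Fin (n + 1)) N | ∀ i, p (x i)} : Finset _),
      x 0 ∈ ({a ∈ Icc (-N) N | p a} : Finset ℤ) := by
    simp only [mem_filter, sumSqReps, Fintype.mem_piFinset]
    exact fun x hx ↦ ⟨hx.1.1 0, hx.2 0⟩
  have h := sum_card_mul_sq_sub_filter_sumSqReps (k := N)
    (fun x : Fin (n + 1) → ℤ ↦ ∀ i, p (x i))
    (fun σ x ↦ (σ.surjective.forall (p := fun i ↦ p (x i))).symm) 0
  rw [← sum_fiberwise_of_maps_to maps] at h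
  rw [← h]
  refine sum_congr rfl fun a ha ↦ ?_
  rw [← card_filter_sumSqReps_apply_zero n N a p (mem_filter.1 ha).2, ← filter_filter, mul_comm,
    ← nsmul_eq_mul, ← sum_const]
  refine sum_congr rfl fun x hx ↦ ?_
  simp [(mem_filter.1 hx).2]

lemma card_filter_odd_sumSqReps_card :
    #{x ∈ sumSqReps ι (Fintype.card ι) | ∀ i, Odd (x i)} = 2 ^ Fintype.card ι := by
  have eq_piFinset : ({x ∈ sumSqReps ι (Fintype.card ι) | ∀ i, Odd (x i)} : Finset (ι → ℤ)) =
      Fintype.piFinset fun _ ↦ {1, -1} := by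
    ext x
    simp only [mem_filter, mem_sumSqReps, Fintype.mem_piFinset, mem_insert, mem_singleton,
      ← sq_eq_one_iff]
    constructor
    · rintro ⟨hsum, hodd⟩ i
      have one_le (i : ι) (_ : i ∈ univ) : 1 ≤ x i ^ 2 :=
        Int.add_one_le_iff.2 (sq_pos_of_ne_zero fun h ↦ by simpa [h] using hodd i)
      exact ((sum_eq_sum_iff_of_le one_le).1 (by simp [hsum]) i (mem_univ i)).symm
    · intro h
      exact ⟨by simp [h], fun i ↦ by rcases sq_eq_one_iff.1 (h i) with h | h <;> simp [h]⟩
  simp [eq_piFinset]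

end SumSqReps

section ModSupport

/-- The support of the reduction of `x` modulo `m`: the indices of the entries that `m` does not
divide. -/
def modSupport {ι : Type*} [Fintype ι] (m : ℤ) (x : ι → ℤ) : Finset ι := {i | ¬m ∣ x i}

variable {ι : Type*} [Fintype ι] {m : ℤ} {x : ι → ℤ}

@[simp]
lemma mem_modSupport {i : ι} : i ∈ modSupport m x ↔ ¬m ∣ x i := by simp [modSupport]

lemma modSupport_eq_empty : modSupport m x = ∅ ↔ ∀ i, m ∣ x i := by
  simp [modSupport, filter_eq_empty_iff]

lemma map_modSupport_comp (σ : Equiv.Perm ι) :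
    (modSupport m (x ∘ σ)).map σ.toEmbedding = modSupport m x := by
  ext i
  simp [mem_map_equiv]

lemma sum_sq_modEq_card_modSupport_two : ∑ i, x i ^ 2 ≡ #(modSupport 2 x) [ZMOD 4] := by
  rw [modSupport, card_filter]
  push_cast
  refine Int.ModEq.sum fun i _ ↦ ?_
  split_ifs with h
  · exact Int.modEq_zero_iff_dvd.2 (pow_dvd_pow_of_dvd h 2)
  · exact Int.sq_mod_four_eq_one_of_odd (Int.not_even_iff_odd.1 (mt even_iff_two_dvd.1 h))

lemma sum_sq_modEq_card_modSupport_three : ∑ i, x i ^ 2 ≡ #(modSupport 3 x) [ZMOD 3] := by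
  rw [modSupport, card_filter]
  push_cast
  refine Int.ModEq.sum fun i _ ↦ ?_
  split_ifs with h
  · exact Int.modEq_zero_iff_dvd.2 (dvd_pow h two_ne_zero)
  · exact Int.ModEq.pow_card_sub_one_eq_one Nat.prime_three
      (Int.prime_three.coprime_iff_not_dvd.2 h).symm

variable [DecidableEq ι] {k : ℤ}

lemma card_filter_modSupport_congr {S T : Finset ι} (h : #S = #T) :
    #{x ∈ sumSqReps ι k | modSupport m x = S} = #{x ∈ sumSqReps ι k | modSupport m x = T} := by
  obtain ⟨σ, rfl⟩ := Equiv.Perm.exists_map_finset_eq S T h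
  rw [← card_filter_comp_perm_sumSqReps σ]
  congr! 2 with x
  rw [← map_modSupport_comp σ (x := x), map_inj]

lemma card_filter_card_modSupport (S : Finset ι) :
    #{x ∈ sumSqReps ι k | #(modSupport m x) = #S} =
      (Fintype.card ι).choose #S * #{x ∈ sumSqReps ι k | modSupport m x = S} := by
  rw [card_eq_sum_card_fiberwise (f := modSupport m) (t := powersetCard #S univ)
    fun x hx ↦ by simpa using (mem_filter.1 hx).2]
  rw [← card_univ, ← card_powersetCard, ← smul_eq_mul, ← sum_const]
  refine sum_congr rfl fun T hT ↦ ?_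
  rw [mem_powersetCard_univ] at hT
  rw [← card_filter_modSupport_congr hT, filter_filter]
  congr! 2 with x
  grind

lemma card_filter_modSupport_eq_empty {c : ℤ} (hc : c ≠ 0) :
    #{x ∈ sumSqReps ι (c ^ 2 * k) | modSupport c x = ∅} = #(sumSqReps ι k) := by
  symm
  refine card_nbij (c • ·) ?_ ?_ ?_
  · intro y
    simp +contextual [modSupport_eq_empty, mul_pow, ← mul_sum]
  · exact (smul_right_injective _ hc).injOn
  · intro x
    simp only [coe_filter, Set.mem_ofPred_eq, mem_sumSqReps, modSupport_eq_empty]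
    rintro ⟨h, hdvd⟩
    choose y hy using hdvd
    obtain rfl : x = c • y := funext hy
    refine ⟨y, ?_, rfl⟩
    simpa [mul_pow, ← mul_sum, hc] using h

lemma sq_dvd_of_modSupport_eq_empty (hx : x ∈ sumSqReps ι k) (h : modSupport m x = ∅) :
    m ^ 2 ∣ k := by
  rw [← mem_sumSqReps.1 hx]
  exact dvd_sum fun i _ ↦ pow_dvd_pow_of_dvd (modSupport_eq_empty.1 h i) 2

/-- A residue prime to `3` is `1` or `-1`, so each entry prime to `3` has exactly one sign that
makes it `1` modulo `3`. -/
lemma card_filter_modSupport_three (S : Finset ι) :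
    #{x ∈ sumSqReps ι k | modSupport 3 x = S} =
      2 ^ #S * #{x ∈ sumSqReps ι k | ∀ i, x i % 3 = if i ∈ S then 1 else 0} := by
  rw [← card_powerset, ← card_product]
  refine card_nbij'
    (fun x ↦ (({i | x i % 3 = 2} : Finset ι), fun i ↦ if x i % 3 = 2 then -x i else x i))
    (fun y i ↦ if i ∈ y.1 then -y.2 i else y.2 i) ?_ ?_ ?_ ?_
  · intro x
    simp only [coe_filter, Set.mem_ofPred_eq, mem_sumSqReps, mem_coe, mem_product, mem_powerset,
      mem_filter, apply_ite (· ^ 2), neg_sq, ite_self, Finset.ext_iff, mem_modSupport]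
    rintro ⟨h, hS⟩
    refine ⟨fun i ↦ ?_, h, fun i ↦ ?_⟩ <;> grind
  · rintro ⟨T, y⟩
    simp only [coe_filter, Set.mem_ofPred_eq, mem_sumSqReps, mem_coe, mem_product, mem_powerset,
      mem_filter, apply_ite (· ^ 2), neg_sq, ite_self, Finset.ext_iff, mem_modSupport]
    rintro ⟨hT, h, hy⟩
    refine ⟨h, fun i ↦ ?_⟩
    grind
  · intro x _
    ext i
    grind
  · rintro ⟨T, y⟩
    simp only [mem_coe, mem_product, mem_powerset, mem_filter]
    rintro ⟨hT, -, hy⟩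
    ext i <;> grind

end ModSupport

section SigmaDiv

lemma sigmaDiv_of_not_dvd {n k : ℕ} (h : ¬k ∣ n) : sigmaDiv n k = 0 := if_neg h

lemma sigmaDiv_zero (k : ℕ) : sigmaDiv 0 k = 0 := by simp [sigmaDiv]

lemma sigmaDiv_mul_left {l : ℕ} (hl : 0 < l) (n k : ℕ) :
    sigmaDiv (l * n) (l * k) = sigmaDiv n k := by
  simp only [sigmaDiv, Nat.mul_dvd_mul_iff_left hl, Nat.mul_div_mul_left _ _ hl]

lemma sigmaDiv_mul_self {k : ℕ} (hk : 0 < k) (n : ℕ) : sigmaDiv (k * n) k = sigmaDiv n 1 := by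
  simpa using sigmaDiv_mul_left hk n 1

lemma sigmaDiv_one (n : ℕ) : sigmaDiv n 1 = ∑ d ∈ n.divisors, (d : ℤ) := by simp [sigmaDiv]

lemma divisors_prime_mul {p : ℕ} (hp : p.Prime) (m : ℕ) :
    (p * m).divisors = m.divisors ∪ m.divisors.image (p * ·) := by
  ext d
  simp only [mem_union, mem_image, Nat.mem_divisors, mul_ne_zero_iff]
  constructor
  · rintro ⟨hd, -, hm⟩
    by_cases hpd : p ∣ d
    · obtain ⟨e, rfl⟩ := hpd
      exact .inr ⟨e, ⟨Nat.dvd_of_mul_dvd_mul_left hp.pos hd, hm⟩, rfl⟩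
    · exact .inl ⟨((hp.coprime_iff_not_dvd.2 hpd).symm).dvd_of_dvd_mul_left hd, hm⟩
  · rintro (⟨hd, hm⟩ | ⟨e, ⟨he, hm⟩, rfl⟩)
    · exact ⟨hd.mul_left p, hp.ne_zero, hm⟩
    · exact ⟨mul_dvd_mul_left p he, hp.ne_zero, hm⟩

lemma sum_divisors_inter_image_mul {p : ℕ} (hp : 0 < p) (m : ℕ) :
    ∑ d ∈ m.divisors ∩ m.divisors.image (p * ·), (d : ℤ) = p * sigmaDiv m p := by
  by_cases h : p ∣ m
  · obtain ⟨l, rfl⟩ := h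
    have inter_eq : (p * l).divisors ∩ (p * l).divisors.image (p * ·) =
        l.divisors.image (p * ·) := by
      ext d
      simp only [mem_inter, mem_image, Nat.mem_divisors, mul_ne_zero_iff]
      constructor
      · rintro ⟨⟨hd, -, hl⟩, e, -, rfl⟩
        exact ⟨e, ⟨Nat.dvd_of_mul_dvd_mul_left hp hd, hl⟩, rfl⟩
      · rintro ⟨e, ⟨he, hl⟩, rfl⟩
        exact ⟨⟨mul_dvd_mul_left p he, hp.ne', hl⟩, e, ⟨he.mul_left p, hp.ne', hl⟩, rfl⟩
    rw [inter_eq, sum_image (mul_right_injective₀ hp.ne').injOn, sigmaDiv_mul_self hp,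
      sigmaDiv_one, mul_sum]
    simp
  · rw [sigmaDiv_of_not_dvd h, mul_zero, ← sum_empty]
    congr 1
    refine eq_empty_of_forall_notMem fun d hd ↦ h ?_
    simp only [mem_inter, mem_image, Nat.mem_divisors] at hd
    obtain ⟨⟨hd, -⟩, e, -, rfl⟩ := hd
    exact dvd_of_mul_right_dvd hd

lemma sigmaDiv_prime_mul_one {p : ℕ} (hp : p.Prime) (m : ℕ) :
    sigmaDiv (p * m) 1 = (p + 1) * sigmaDiv m 1 - p * sigmaDiv m p := by
  have h := sum_union_inter (s₁ := m.divisors) (s₂ := m.divisors.image (p * ·))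
    (f := fun d : ℕ ↦ (d : ℤ))
  rw [← divisors_prime_mul hp, sum_divisors_inter_image_mul hp.pos,
    sum_image (mul_right_injective₀ hp.ne_zero).injOn] at h
  simp only [Nat.cast_mul, ← mul_sum] at h
  simp only [sigmaDiv_one] at h ⊢
  linear_combination h

lemma sigmaDiv_prime_mul {p k : ℕ} (hp : p.Prime) (hk : k.Coprime p) (m : ℕ) :
    sigmaDiv (p * m) k = (p + 1) * sigmaDiv m k - p * sigmaDiv m (p * k) := by
  by_cases h : k ∣ m
  · obtain ⟨l, rfl⟩ := h
    have hk0 : 0 < k := Nat.pos_of_ne_zero fun h ↦ hp.ne_one (by simpa [h] using hk)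
    rw [mul_left_comm, mul_comm p k, sigmaDiv_mul_self hk0, sigmaDiv_mul_self hk0,
      sigmaDiv_mul_left hk0, sigmaDiv_prime_mul_one hp]
  · rw [sigmaDiv_of_not_dvd h, sigmaDiv_of_not_dvd (mt hk.dvd_of_dvd_mul_left h),
      sigmaDiv_of_not_dvd (mt dvd_of_mul_left_dvd h)]
    simp

end SigmaDiv

section Windmills

/-- The triples `(i, d, e)` with `d, e > 0` and `i ^ 2 + 4 * d * e = N`. Unlike in Zagier's proof of
Fermat's two-square theorem, `i` may be negative. -/
noncomputable def windmills (N : ℤ) : Finset (ℤ × ℤ × ℤ) :=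
  {x ∈ Icc (-N) N ×ˢ Icc 1 N ×ˢ Icc 1 N | x.1 ^ 2 + 4 * x.2.1 * x.2.2 = N}

variable {N : ℤ}

lemma mem_windmills {i d e : ℤ} :
    (i, d, e) ∈ windmills N ↔ 0 < d ∧ 0 < e ∧ i ^ 2 + 4 * d * e = N := by
  simp only [windmills, mem_filter, mem_product]
  constructor
  · rintro ⟨⟨-, hd, he⟩, h⟩
    exact ⟨(mem_Icc.1 hd).1, (mem_Icc.1 he).1, h⟩
  · rintro ⟨hd, he, h⟩
    refine ⟨⟨mem_Icc_neg_self_of_sq_le (by nlinarith [mul_pos hd he]), mem_Icc.2 ⟨hd, ?_⟩,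
      mem_Icc.2 ⟨he, ?_⟩⟩, h⟩ <;> nlinarith [sq_nonneg i]

lemma sum_windmills_neg (f : ℤ × ℤ × ℤ → ℤ) :
    ∑ x ∈ windmills N, f (-x.1, x.2) = ∑ x ∈ windmills N, f x := by
  refine sum_nbij' (fun x ↦ (-x.1, x.2)) (fun x ↦ (-x.1, x.2)) ?_ ?_ ?_ ?_ ?_ <;>
    simp [mem_windmills]

lemma sum_windmills_swap (f : ℤ × ℤ × ℤ → ℤ) :
    ∑ x ∈ windmills N, f (x.1, x.2.swap) = ∑ x ∈ windmills N, f x := by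
  refine sum_nbij' (fun x ↦ (x.1, x.2.swap)) (fun x ↦ (x.1, x.2.swap)) ?_ ?_ ?_ ?_ ?_ <;>
    simp +contextual [mem_windmills, mul_right_comm]

/-- The summand changes sign under the involution `(i, d, e) ↦ (-i - 2 * d, d, e - i - d)` of
`{x ∈ windmills N | x.1 + x.2.1 < x.2.2}`. -/
lemma sum_windmills_filter_lt :
    ∑ x ∈ windmills N with x.1 + x.2.1 < x.2.2,
      ((x.2.1 * x.2.2 - x.1 ^ 2) * (x.2.1 + x.2.2) - x.1 * (x.2.1 ^ 2 - x.2.2 ^ 2)) = 0 := by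
  rw [← self_eq_neg, ← sum_neg_distrib]
  refine sum_nbij' (fun x ↦ (-x.1 - 2 * x.2.1, x.2.1, x.2.2 - x.1 - x.2.1))
    (fun x ↦ (-x.1 - 2 * x.2.1, x.2.1, x.2.2 - x.1 - x.2.1)) ?_ ?_ ?_ ?_ ?_
  all_goals
    rintro ⟨i, d, e⟩
    simp only [mem_filter, mem_windmills]
  · rintro ⟨⟨hd, he, rfl⟩, h⟩
    exact ⟨⟨hd, by linarith, by ring⟩, by linarith⟩
  · rintro ⟨⟨hd, he, rfl⟩, h⟩
    exact ⟨⟨hd, by linarith, by ring⟩, by linarith⟩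
  · rintro -
    ext <;> dsimp only <;> ring
  · rintro -
    ext <;> dsimp only <;> ring
  · rintro -
    ring

lemma sum_windmills_filter_gt :
    ∑ x ∈ windmills N with x.2.2 < x.1 + x.2.1,
      ((x.2.1 * x.2.2 - x.1 ^ 2) * (x.2.1 + x.2.2) - x.1 * (x.2.1 ^ 2 - x.2.2 ^ 2)) = 0 := by
  rw [← sum_windmills_filter_lt (N := N), sum_filter, sum_filter, ← sum_windmills_neg,
    ← sum_windmills_swap]
  refine sum_congr rfl fun x _ ↦ ?_
  simp only [Prod.fst_swap, Prod.snd_swap]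
  congr 1
  · rw [neg_add_eq_sub, lt_sub_iff_add_lt']
  · ring

lemma sum_windmills_mul_add (hN : ¬IsSquare N) :
    ∑ x ∈ windmills N, (x.2.1 * x.2.2 - x.1 ^ 2) * (x.2.1 + x.2.2) = 0 := by
  have odd_part : ∑ x ∈ windmills N, x.1 * (x.2.1 ^ 2 - x.2.2 ^ 2) = 0 := by
    rw [← self_eq_neg, ← sum_neg_distrib]
    nth_rw 1 [← sum_windmills_neg]
    simp
  have ne_of_mem : ∀ x ∈ windmills N, ¬x.1 + x.2.1 < x.2.2 ↔ x.2.2 < x.1 + x.2.1 := by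
    rintro ⟨i, d, e⟩ hx
    refine not_lt.trans (Ne.le_iff_lt fun he ↦ hN ⟨i + 2 * d, ?_⟩)
    dsimp only at he
    rw [← (mem_windmills.1 hx).2.2, he]
    ring
  have h := sum_filter_add_sum_filter_not (windmills N) (fun x ↦ x.1 + x.2.1 < x.2.2) fun x ↦
    (x.2.1 * x.2.2 - x.1 ^ 2) * (x.2.1 + x.2.2) - x.1 * (x.2.1 ^ 2 - x.2.2 ^ 2)
  rw [filter_congr ne_of_mem, sum_windmills_filter_lt, sum_windmills_filter_gt,
    sum_sub_distrib, odd_part] at h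
  linarith

lemma sum_windmills_mul_fst (hN : ¬IsSquare N) :
    ∑ x ∈ windmills N, (N - 5 * x.1 ^ 2) * x.2.1 = 0 := by
  have swap := sum_windmills_swap (N := N) fun x ↦ (N - 5 * x.1 ^ 2) * x.2.1
  have sum_eq : ∑ x ∈ windmills N, ((N - 5 * x.1 ^ 2) * x.2.1 + (N - 5 * x.1 ^ 2) * x.2.2) =
      4 * ∑ x ∈ windmills N, (x.2.1 * x.2.2 - x.1 ^ 2) * (x.2.1 + x.2.2) := by
    rw [mul_sum]
    refine sum_congr rfl fun ⟨i, d, e⟩ hx ↦ ?_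
    rw [← (mem_windmills.1 hx).2.2]
    ring
  rw [sum_add_distrib, sum_windmills_mul_add hN] at sum_eq
  simp only [Prod.fst_swap] at swap
  linarith

lemma sum_windmills_filter_fst_eq (i : ℤ) :
    ∑ x ∈ windmills N with x.1 = i, x.2.1 = sigmaDiv (N - i ^ 2).toNat 4 := by
  by_cases h : 4 ∣ (N - i ^ 2).toNat
  · rw [sigmaDiv, if_pos h, ← Nat.sum_divisorsAntidiagonal fun d _ ↦ (d : ℤ)]
    refine sum_nbij' (fun x ↦ (x.2.1.toNat, x.2.2.toNat)) (fun y ↦ (i, (y.1 : ℤ), (y.2 : ℤ)))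
      ?_ ?_ ?_ ?_ ?_
    · rintro ⟨j, d, e⟩ hx
      simp only [mem_filter, mem_windmills] at hx
      obtain ⟨⟨hd, he, hN⟩, rfl⟩ := hx
      lift d to ℕ using hd.le
      lift e to ℕ using he.le
      have : N - j ^ 2 = ↑(4 * (d * e)) := by push_cast; linarith
      simp only [Int.toNat_natCast, Nat.mem_divisorsAntidiagonal, this]
      rw [Nat.mul_div_cancel_left _ four_pos]
      exact ⟨rfl, mul_ne_zero (by lia) (by lia)⟩
    · rintro ⟨d, e⟩ hy
      simp only [Nat.mem_divisorsAntidiagonal] at hy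
      simp only [mem_filter, mem_windmills]
      obtain ⟨hy, hne⟩ := hy
      obtain ⟨hd, he⟩ := mul_ne_zero_iff.1 (hy ▸ hne)
      refine ⟨⟨by lia, by lia, ?_⟩, trivial⟩
      have : N - i ^ 2 = ↑(4 * (d * e)) := by lia
      push_cast at this
      linarith
    · rintro ⟨j, d, e⟩ hx
      simp only [mem_filter, mem_windmills] at hx
      simp [hx.1.1.le, hx.1.2.1.le, hx.2]
    · simp
    · rintro ⟨j, d, e⟩ hx
      simp only [mem_filter, mem_windmills] at hx
      simp [hx.1.1.le]
  · rw [sigmaDiv_of_not_dvd h]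
    refine sum_eq_zero fun ⟨j, d, e⟩ hx ↦ ?_
    simp only [mem_filter, mem_windmills] at hx
    obtain ⟨⟨-, -, rfl⟩, rfl⟩ := hx
    grind

lemma sum_mul_sigmaDiv_four (hN : ¬IsSquare N) :
    ∑ i ∈ Icc (-N) N, (N - 5 * i ^ 2) * sigmaDiv (N - i ^ 2).toNat 4 = 0 := by
  have maps : ∀ x ∈ windmills N, x.1 ∈ Icc (-N) N := fun x hx ↦
    (mem_product.1 (mem_filter.1 hx).1).1
  rw [← sum_windmills_mul_fst hN, ← sum_fiberwise_of_maps_to maps]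
  refine sum_congr rfl fun i _ ↦ ?_
  rw [← sum_windmills_filter_fst_eq, mul_sum]
  exact sum_congr rfl fun x hx ↦ by rw [(mem_filter.1 hx).2]

end Windmills

section Jacobi

lemma not_isSquare_of_emod_eight_eq_five {N : ℤ} (hN : N % 8 = 5) : ¬IsSquare N := by
  rintro ⟨i, rfl⟩
  rw [← pow_two] at hN
  rcases Int.even_or_odd' i with ⟨j, rfl | rfl⟩
  · ring_nf at hN
    lia
  · have := Int.eight_dvd_sq_sub_one_of_odd (odd_two_mul_add_one j)
    lia

/-- In the recursion for `k + 1` the terms `i = 1` and `i = -1` both involve `D k`, and the others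
involve `D` at smaller arguments. -/
lemma eq_zero_of_sum_odd_mul_eq_zero {D : ℤ → ℤ} (hneg : ∀ k < 0, D k = 0) (hfour : D 4 = 0)
    (hsum : ∀ k, k % 8 = 4 →
      ∑ i ∈ Icc (-(k + 1)) (k + 1) with Odd i, (k + 1 - 5 * i ^ 2) * D (k + 1 - i ^ 2) = 0)
    (k : ℤ) (hk : k % 8 = 4) : D k = 0 := by
  induction hm : k.toNat using Nat.strong_induction_on generalizing k with
  | _ m ih =>
  rcases lt_or_ge k 0 with hk0 | hk0
  · exact hneg k hk0
  by_cases h4 : k = 4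
  · rw [h4, hfour]
  have h := hsum k hk
  rw [← sum_subset (s₁ := {1, -1})] at h
  · have hk4 : (k - 4) * D k = 0 := by
      rw [sum_pair (by decide)] at h
      ring_nf at h
      linarith
    exact (mul_eq_zero.1 hk4).resolve_left (sub_ne_zero.2 h4)
  · intro i hi
    rw [mem_insert, mem_singleton] at hi
    rw [mem_filter, mem_Icc]
    rcases hi with rfl | rfl <;> exact ⟨by lia, by decide⟩
  · intro i hi hi'
    simp only [mem_insert, mem_singleton, ← sq_eq_one_iff] at hi'
    have hmod := Int.eight_dvd_sq_sub_one_of_odd (mem_filter.1 hi).2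
    have hsq := sq_nonneg i
    rw [ih _ (by lia) _ (by lia) rfl, mul_zero]

lemma sum_odd_mul_sigmaDiv_four {N : ℤ} (hN : N % 8 = 5) :
    ∑ i ∈ Icc (-N) N with Odd i, (N - 5 * i ^ 2) * sigmaDiv (N - i ^ 2).toNat 4 = 0 := by
  rw [← sum_mul_sigmaDiv_four (not_isSquare_of_emod_eight_eq_five hN)]
  refine sum_filter_of_ne fun i _ hi ↦ ?_
  contrapose! hi
  obtain ⟨j, rfl⟩ := Int.not_odd_iff_even.1 hi
  rcases le_or_gt N ((j + j) ^ 2) with h | h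
  · rw [Int.toNat_of_nonpos (by linarith), sigmaDiv_zero, mul_zero]
  · rw [sigmaDiv_of_not_dvd fun h4 ↦ ?_, mul_zero]
    ring_nf at h h4
    lia

lemma card_filter_odd_sumSqReps_four (k : ℤ) (hk : k % 8 = 4) :
    (#{x ∈ sumSqReps (Fin 4) k | ∀ i, Odd (x i)} : ℤ) = 16 * sigmaDiv k.toNat 4 := by
  refine sub_eq_zero.1 <| eq_zero_of_sum_odd_mul_eq_zero
    (D := fun k ↦ (#{x ∈ sumSqReps (Fin 4) k | ∀ i, Odd (x i)} : ℤ) - 16 * sigmaDiv k.toNat 4)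
    (fun k hk ↦ ?_) ?_ (fun k hk ↦ ?_) k hk
  · simp [sumSqReps_of_neg hk, Int.toNat_of_nonpos hk.le, sigmaDiv_zero]
  · have h : #{x ∈ sumSqReps (Fin 4) 4 | ∀ i, Odd (x i)} = 16 := by
      convert card_filter_odd_sumSqReps_card (ι := Fin 4) <;> rfl
    have hσ : sigmaDiv 4 4 = 1 := by simp [sigmaDiv]
    rw [h, show Int.toNat 4 = 4 from rfl, hσ]
    rfl
  · have h₁ := sum_mul_card_filter_sumSqReps 4 (k + 1) Odd
    have h₂ := sum_odd_mul_sigmaDiv_four (N := k + 1) (by lia)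
    rw [show ((4 : ℕ) : ℤ) + 1 = 5 from rfl] at h₁
    simp only [mul_sub, sum_sub_distrib, h₁, mul_left_comm _ (16 : ℤ), ← mul_sum, h₂]
    simp

lemma even_add_iff_mem_modSupport {ι : Type*} [Fintype ι] (x : ι → ℤ) (i j : ι) :
    Even (x i + x j) ↔ (i ∈ modSupport 2 x ↔ j ∈ modSupport 2 x) := by
  rw [Int.even_add, mem_modSupport, mem_modSupport, not_iff_not, even_iff_two_dvd, even_iff_two_dvd]

variable {k : ℤ}

lemma card_modSupport_two_modEq {ι : Type*} [Fintype ι] [DecidableEq ι] {x : ι → ℤ}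
    (hx : x ∈ sumSqReps ι k) : #(modSupport 2 x) ≡ k [ZMOD 4] :=
  mem_sumSqReps.1 hx ▸ sum_sq_modEq_card_modSupport_two.symm

lemma card_filter_even_add_sumSqReps_two_mul :
    #{x ∈ sumSqReps (Fin 4) (2 * k) | Even (x 0 + x 1)} = #(sumSqReps (Fin 4) k) := by
  symm
  refine card_nbij (fun y ↦ ![y 0 + y 1, y 0 - y 1, y 2 + y 3, y 2 - y 3]) ?_ ?_ ?_
  · intro y
    simp only [mem_coe, mem_filter, mem_sumSqReps, Fin.sum_univ_four]
    rintro rfl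
    exact ⟨by simp only [Matrix.cons_val_zero, Matrix.cons_val_one, Matrix.cons_val]; ring, by simp⟩
  · intro y _ z _ h
    simp only [Matrix.vecCons_inj] at h
    ext i
    fin_cases i <;> simp <;> lia
  · intro x hx
    simp only [mem_coe, mem_filter, mem_sumSqReps, Fin.sum_univ_four] at hx
    obtain ⟨hsum, h₀₁⟩ := hx
    have h₂₃ : Even (x 2 + x 3) := by
      have heven := hsum ▸ even_two_mul k
      simp only [Int.even_add, Int.even_pow' two_ne_zero] at heven h₀₁ ⊢
      tauto
    obtain ⟨u, hu⟩ := h₀₁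
    obtain ⟨v, hv⟩ := h₂₃
    refine ⟨![u, x 0 - u, v, x 2 - v], ?_, ?_⟩
    · rw [eq_sub_of_add_eq' hu, eq_sub_of_add_eq' hv] at hsum
      simp only [mem_coe, mem_sumSqReps, Fin.sum_univ_four, Matrix.cons_val_zero,
        Matrix.cons_val_one, Matrix.cons_val]
      linarith
    · ext i
      fin_cases i <;> simp <;> lia

lemma card_sumSqReps_four_four_mul :
    #(sumSqReps (Fin 4) (4 * k)) = #(sumSqReps (Fin 4) (2 * k)) := by
  rw [← card_filter_even_add_sumSqReps_two_mul (k := 2 * k), ← mul_assoc, filter_true_of_mem]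
  · rfl
  intro x hx
  have hcard : #(modSupport 2 x) % 4 = 0 := by
    have := (card_modSupport_two_modEq hx).eq
    lia
  have mem_iff_mem : ∀ S : Finset (Fin 4), #S % 4 = 0 → (0 ∈ S ↔ 1 ∈ S) := by decide
  exact (even_add_iff_mem_modSupport x 0 1).2 (mem_iff_mem _ hcard)

lemma card_sumSqReps_four_two_mul_of_odd (hk : Odd k) :
    #(sumSqReps (Fin 4) (2 * k)) = 3 * #(sumSqReps (Fin 4) k) := by
  have hcard : ∀ x ∈ sumSqReps (Fin 4) (2 * k), #(modSupport 2 x) = 2 := by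
    intro x hx
    have hmod := (card_modSupport_two_modEq hx).eq
    have hle := card_le_univ (modSupport 2 x)
    rw [Fintype.card_fin] at hle
    obtain ⟨j, rfl⟩ := hk
    lia
  have mem_iff_mem : ∀ S : Finset (Fin 4), #S = 2 →
      ((0 ∈ S ↔ 1 ∈ S) ↔ S = {0, 1} ∨ S = {2, 3}) := by decide
  have total : #{x ∈ sumSqReps (Fin 4) (2 * k) | #(modSupport 2 x) = 2} =
      6 * #{x ∈ sumSqReps (Fin 4) (2 * k) | modSupport 2 x = {0, 1}} :=
    card_filter_card_modSupport {0, 1}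
  rw [filter_true_of_mem hcard] at total
  have even_add : #(sumSqReps (Fin 4) k) =
      #{x ∈ sumSqReps (Fin 4) (2 * k) | modSupport 2 x = {0, 1}} +
        #{x ∈ sumSqReps (Fin 4) (2 * k) | modSupport 2 x = {2, 3}} := by
    rw [← card_filter_even_add_sumSqReps_two_mul, ← card_union_of_disjoint, ← filter_or]
    · refine congrArg card (filter_congr fun x hx ↦ ?_)
      rw [even_add_iff_mem_modSupport, mem_iff_mem _ (hcard x hx)]
    · exact disjoint_filter.2 fun x _ h ↦ by rw [h]; decide
  rw [card_filter_modSupport_congr (S := {2, 3}) (T := {0, 1}) rfl] at even_add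
  lia

lemma card_sumSqReps_four_four_mul_eq_add :
    #(sumSqReps (Fin 4) (4 * k)) =
      #(sumSqReps (Fin 4) k) + #{x ∈ sumSqReps (Fin 4) (4 * k) | ∀ i, Odd (x i)} := by
  rw [← card_filter_modSupport_eq_empty (k := k) two_ne_zero, show (2 : ℤ) ^ 2 = 4 from rfl,
    ← card_filter_add_card_filter_not (s := sumSqReps (Fin 4) (4 * k)) (modSupport 2 · = ∅)]
  congr 2
  refine filter_congr fun x hx ↦ ?_
  have hcard : #(modSupport 2 x) % 4 = 0 := by
    have := (card_modSupport_two_modEq hx).eq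
    lia
  have ne_empty_iff : ∀ S : Finset (Fin 4), #S % 4 = 0 → (¬S = ∅ ↔ ∀ i, i ∈ S) := by decide
  rw [ne_empty_iff _ hcard]
  simp [← even_iff_two_dvd]

lemma card_sumSqReps_four_of_odd {m : ℕ} (hm : Odd m) :
    (#(sumSqReps (Fin 4) m) : ℤ) = 8 * sigmaDiv m 1 := by
  have h₁ := card_sumSqReps_four_four_mul_eq_add (k := m)
  have h₂ := card_sumSqReps_four_four_mul (k := m)
  have h₃ := card_sumSqReps_four_two_mul_of_odd (k := m) (by exact_mod_cast hm)
  have h₄ := card_filter_odd_sumSqReps_four (4 * m) (by obtain ⟨j, rfl⟩ := hm; lia)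
  rw [show ((4 : ℤ) * m).toNat = 4 * m by lia, sigmaDiv_mul_self four_pos] at h₄
  lia

/-- Jacobi's four-square theorem. -/
theorem card_sumSqReps_four (n : ℕ) (hn : n ≠ 0) :
    (#(sumSqReps (Fin 4) n) : ℤ) = 8 * sigmaDiv n 1 - 32 * sigmaDiv n 4 := by
  induction n using Nat.strong_induction_on with
  | _ n ih =>
  rcases Nat.even_or_odd' n with ⟨m, rfl | rfl⟩
  · have h := sigmaDiv_prime_mul_one Nat.prime_two m
    rcases Nat.even_or_odd' m with ⟨l, rfl | rfl⟩
    · have h' := sigmaDiv_prime_mul_one Nat.prime_two l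
      have ih' := ih (2 * l) (by lia) (by lia)
      rw [sigmaDiv_mul_self two_pos] at h
      rw [show 2 * (2 * l) = 4 * l by ring] at h ⊢
      rw [show (4 : ℕ) = 2 * 2 by rfl, sigmaDiv_mul_left two_pos] at ih'
      rw [sigmaDiv_mul_self four_pos]
      push_cast at *
      rw [card_sumSqReps_four_four_mul]
      linarith
    · have hodd := card_sumSqReps_four_of_odd (odd_two_mul_add_one l)
      have htwo := card_sumSqReps_four_two_mul_of_odd (k := 2 * l + 1) ⟨l, rfl⟩
      rw [sigmaDiv_of_not_dvd (by lia : ¬2 ∣ 2 * l + 1)] at h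
      rw [sigmaDiv_of_not_dvd (by lia : ¬4 ∣ 2 * (2 * l + 1)), h]
      push_cast at *
      lia
  · rw [card_sumSqReps_four_of_odd (odd_two_mul_add_one m),
      sigmaDiv_of_not_dvd (by lia : ¬4 ∣ 2 * m + 1)]
    simp

end Jacobi

section ModThree

lemma card_filter_modSupport_eq_empty_four {n c : ℕ} (hn : n ≠ 0) (hc : c ≠ 0) :
    (#{x ∈ sumSqReps (Fin 4) n | modSupport c x = ∅} : ℤ) =
      8 * sigmaDiv n (c ^ 2) - 32 * sigmaDiv n (c ^ 2 * 4) := by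
  by_cases h : c ^ 2 ∣ n
  · obtain ⟨m, rfl⟩ := h
    have hpos : 0 < c ^ 2 := by positivity
    rw [sigmaDiv_mul_self hpos, sigmaDiv_mul_left hpos,
      ← card_sumSqReps_four m (right_ne_zero_of_mul hn),
      ← card_filter_modSupport_eq_empty (Int.natCast_ne_zero.2 hc)]
    push_cast
    rfl
  · rw [sigmaDiv_of_not_dvd h, sigmaDiv_of_not_dvd (mt dvd_of_mul_right_dvd h),
      filter_false_of_mem fun x hx h' ↦ h ?_]
    · simp
    · exact_mod_cast sq_dvd_of_modSupport_eq_empty hx h'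

lemma card_sumSqReps_four_of_three_dvd {k : ℤ} (hk : 3 ∣ k) :
    #(sumSqReps (Fin 4) k) = #{x ∈ sumSqReps (Fin 4) k | modSupport 3 x = ∅} +
      32 * #{x ∈ sumSqReps (Fin 4) k |
        ∀ i, x i % 3 = if i ∈ ({0, 1, 2} : Finset (Fin 4)) then 1 else 0} := by
  have card_three : #{x ∈ sumSqReps (Fin 4) k | #(modSupport 3 x) = 3} =
      4 * #{x ∈ sumSqReps (Fin 4) k | modSupport 3 x = {0, 1, 2}} :=
    card_filter_card_modSupport {0, 1, 2}
  have signs : #{x ∈ sumSqReps (Fin 4) k | modSupport 3 x = {0, 1, 2}} =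
      8 * #{x ∈ sumSqReps (Fin 4) k |
        ∀ i, x i % 3 = if i ∈ ({0, 1, 2} : Finset (Fin 4)) then 1 else 0} := by
    convert card_filter_modSupport_three ({0, 1, 2} : Finset (Fin 4)); rfl
  have ne_empty_iff : ∀ S : Finset (Fin 4), #S % 3 = 0 → (¬S = ∅ ↔ #S = 3) := by decide
  have hcard : ∀ x ∈ sumSqReps (Fin 4) k, #(modSupport 3 x) % 3 = 0 := fun x hx ↦ by
    have := (mem_sumSqReps.1 hx ▸ sum_sq_modEq_card_modSupport_three (x := x)).eq
    lia
  rw [← card_filter_add_card_filter_not (s := sumSqReps (Fin 4) k) (modSupport 3 · = ∅),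
    filter_congr fun x hx ↦ ne_empty_iff _ (hcard x hx), card_three, signs]
  ring

lemma three_dvd_of_mod_three {x : Fin 4 → ℤ} {k : ℤ} (hx : x ∈ sumSqReps (Fin 4) k)
    (h : ∀ i, x i % 3 = if i ∈ ({0, 1, 2} : Finset (Fin 4)) then 1 else 0) : 3 ∣ k := by
  have supp : modSupport 3 x = {0, 1, 2} := by
    ext i
    have := h i
    rw [mem_modSupport]
    split_ifs at this with hi <;> simp only [hi] <;> lia
  have hmod := supp ▸ sum_sq_modEq_card_modSupport_three (x := x)
  rw [mem_sumSqReps.1 hx] at hmod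
  exact Int.modEq_zero_iff_dvd.1 hmod

lemma card_filter_mod_three_sumSqReps_four_three_mul {m : ℕ} (hm : m ≠ 0) :
    (#{x ∈ sumSqReps (Fin 4) ↑(3 * m) |
        ∀ i, x i % 3 = if i ∈ ({0, 1, 2} : Finset (Fin 4)) then 1 else 0} : ℤ) =
      sigmaDiv m 1 - sigmaDiv m 3 - 4 * sigmaDiv m 4 + 4 * sigmaDiv m 12 := by
  have hn : 3 * m ≠ 0 := by lia
  have total := card_sumSqReps_four_of_three_dvd (k := ↑(3 * m)) (by simp)
  have jacobi := card_sumSqReps_four (3 * m) hn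
  have all_dvd := card_filter_modSupport_eq_empty_four (c := 3) hn three_ne_zero
  rw [show 3 ^ 2 = 3 * 3 by rfl, show 3 * 3 * 4 = 3 * 12 by rfl, sigmaDiv_mul_left three_pos,
    sigmaDiv_mul_left three_pos] at all_dvd
  rw [sigmaDiv_prime_mul_one Nat.prime_three, sigmaDiv_prime_mul Nat.prime_three (by decide)]
    at jacobi
  push_cast at *
  lia

end ModThree

theorem rep_four_squares_1110_mod3 (n : ℕ) (hn : 0 < n) :
    ({x : Fin 4 → ℤ | x 0 ^ 2 + x 1 ^ 2 + x 2 ^ 2 + x 3 ^ 2 = (n : ℤ) ∧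
        x 0 % 3 = 1 ∧ x 1 % 3 = 1 ∧ x 2 % 3 = 1 ∧ x 3 % 3 = 0}.ncard : ℤ) =
      sigmaDiv n 3 - sigmaDiv n 9 - 4 * sigmaDiv n 12 + 4 * sigmaDiv n 36 := by
  trans (#{x ∈ sumSqReps (Fin 4) n |
    ∀ i, x i % 3 = if i ∈ ({0, 1, 2} : Finset (Fin 4)) then 1 else 0} : ℤ)
  · rw [← Set.ncard_coe_finset]
    congr 2
    ext x
    simp [Fin.sum_univ_four, Fin.forall_fin_succ]
  by_cases h3 : 3 ∣ n
  · obtain ⟨m, rfl⟩ := h3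
    rw [card_filter_mod_three_sumSqReps_four_three_mul (by lia)]
    simp only [← sigmaDiv_mul_left three_pos m, Nat.reduceMul]
  · rw [filter_false_of_mem fun x hx h ↦ h3 (by exact_mod_cast three_dvd_of_mod_three hx h),
      sigmaDiv_of_not_dvd h3, sigmaDiv_of_not_dvd (by lia), sigmaDiv_of_not_dvd (by lia),
      sigmaDiv_of_not_dvd (by lia)]
    simp
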